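/- Let W = ⟨S|M⟩ be a finite rank Coxeter system, let u, w ∈ S and let v ∈ W satisfy |v| ≤ |uv| and |v| ≤ |vw|. Then uv = vw if and only if either v = e and u = w, or there exist k ≥ 1 and indices i_1,j_1,…,i_k,j_k with i_l ≠ j_l and m_{i_l,j_l} < ∞ such that v = r_{i_1,j_1}⋯r_{i_k,j_k} is a reduced expression (i.e. |v| = Σ_l |r_{i_l,j_l}|), u = c_{i_1,j_1}, w = d_{i_k,j_k}, and for every l = 1,…,k−1: c_{i_{l+1},j_{l+1}} = d_{i_l,j_l}, a_{i_{l+1},j_{l+1}} ∉ {s_{i_l}, s_{j_l}}, and b_{i_l,j_l} ∉ {s_{i_{l+1}}, s_{j_{l+1}}}. -/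

import Mathlib

open CoxeterSystem

/-- The alternating word `[i, j, i, j, …]` of length `n`, starting with `i`. -/
def altWord {B : Type*} (i j : B) : ℕ → List B
  | 0 => []
  | n + 1 => i :: altWord j i n

/-- For `i ≠ j` with `M i j < ∞` (encoded `M i j ≠ 0`), the word
`r_{i,j}`: the alternating word starting with `s_i` of length `m_{i,j} − 1`.
(For `m` even this is `s_i(s_j s_i)^{m/2 − 1}`; for `m` odd it is `(s_i s_j)^{(m−1)/2}`.) -/
def rWord {B : Type*} (M : CoxeterMatrix B) (i j : B) : List B :=
  altWord i j (M i j - 1)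

/-- The last letter `b_{i,j}` of `r_{i,j}`: `s_i` if `m_{i,j}` is even, `s_j` if odd. -/
def bIdx {B : Type*} (M : CoxeterMatrix B) (i j : B) : B :=
  if Even (M i j) then i else j

/-- The letter `d_{i,j}`: `s_j` if `m_{i,j}` is even, `s_i` if odd; it satisfies
`c_{i,j} r_{i,j} = r_{i,j} d_{i,j}` where `a_{i,j} = s_i` and `c_{i,j} = s_j`. -/
def dIdx {B : Type*} (M : CoxeterMatrix B) (i j : B) : B :=
  if Even (M i j) then j else i

/-!
Suppose `u v = v w` with `u` not a left descent of `v ≠ 1`, and choose a left descent `i` of `v`.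
Then `u` and `i` are both left descents of `u v`. By strong exchange, and because `s_i s_u` has
order exactly `m_{i,u}`, this forces `m_{i,u}` to be finite and `u v` to factor, additively in
length, through the longest element of the dihedral subgroup generated by `s_i` and `s_u`.
Cancelling `u` gives `v = r_{i,u} y` with `d_{i,u} y = y w`, and the decomposition of `v` follows by
induction on length.

The conditions on consecutive factors come from reducedness alone: if `b_{i_l,j_l} = i_{l+1}`, then
this letter occurs twice in a row. The others then hold because `{b_{i,j}, d_{i,j}} = {i, j}`.

Strong exchange comes from the action of `W` on `W × ZMod 2` that records the parity of inversions,
and the order of `s_i s_j` from the geometric representation, in which the powers of the product of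
two simple reflections are computed by Chebyshev polynomials.
-/

section InversionSequences

variable {B : Type*} {M : CoxeterMatrix B} {W : Type*} [Group W] (cs : CoxeterSystem M W)

theorem length_altWord (i j : B) (n : ℕ) : (altWord i j n).length = n := by
  induction n generalizing i j with
  | zero => rfl
  | succ n ih => simp [altWord, ih]

theorem reverse_altWord (i j : B) (n : ℕ) : (altWord i j n).reverse = alternatingWord j i n := by
  induction n generalizing i j with
  | zero => rfl
  | succ n ih => simp [altWord, ih, alternatingWord]

theorem prod_map_alternatingWord_two_mul {G : Type*} [Monoid G] (f : B → G) (i j : B) (n : ℕ) :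
    ((alternatingWord i j (2 * n)).map f).prod = (f i * f j) ^ n := by
  induction n with
  | zero => simp [alternatingWord]
  | succ n ih =>
    simp only [mul_add, mul_one, alternatingWord, List.concat_eq_append, List.map_append,
      List.prod_append, ih, List.map_singleton, List.prod_singleton, pow_succ, mul_assoc]

theorem leftInvSeq_append (ω ω' : List B) :
    cs.leftInvSeq (ω ++ ω') =
      cs.leftInvSeq ω ++ (cs.leftInvSeq ω').map (MulAut.conj (cs.wordProd ω)) := by
  induction ω with
  | nil => simp
  | cons i ω ih => simp [leftInvSeq, ih, wordProd_cons]

theorem leftInvSeq_altWord (i j : B) (n : ℕ) :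
    cs.leftInvSeq (altWord i j n) =
      (List.range n).map fun k => (cs.simple i * cs.simple j) ^ k * cs.simple i := by
  induction n generalizing i j with
  | zero => rfl
  | succ n ih =>
    have hconj (k : ℕ) : MulAut.conj (cs.simple i) ((cs.simple j * cs.simple i) ^ k * cs.simple j) =
        (cs.simple i * cs.simple j) ^ (k + 1) * cs.simple i := by
      rw [MulAut.conj_apply, inv_simple, ← mul_assoc, ← mul_pow_mul, pow_succ]
      simp only [mul_assoc]
    simp [altWord, leftInvSeq, ih, List.range_succ_eq_map, hconj]

open Classical in
/-- The action of a simple reflection on `W × ZMod 2` by conjugation on the first component,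
which flips the second component at the reflection itself. It generates the action of `W` whose
second component counts occurrences in right inversion sequences modulo `2`. -/
noncomputable def signedConj (i : B) : Equiv.Perm (W × ZMod 2) :=
  Function.Involutive.toPerm
    (fun p => (cs.simple i * p.1 * cs.simple i, p.2 + if p.1 = cs.simple i then 1 else 0))
    fun p => by
      have hfix : cs.simple i * p.1 * cs.simple i = cs.simple i ↔ p.1 = cs.simple i := by
        rw [mul_eq_right, mul_eq_one_iff_inv_eq, inv_simple, eq_comm]
      ext
      · simp [mul_assoc]
      · simp only [hfix, add_assoc, CharTwo.add_self_eq_zero, add_zero]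

open Classical in
theorem signedConj_apply (i : B) (t : W) (e : ZMod 2) :
    signedConj cs i (t, e) =
      (cs.simple i * t * cs.simple i, e + if t = cs.simple i then 1 else 0) :=
  rfl

open Classical in
theorem prod_map_signedConj_apply (ω : List B) (t : W) (e : ZMod 2) :
    (ω.map (signedConj cs)).prod (t, e) =
      (cs.wordProd ω * t * (cs.wordProd ω)⁻¹, e + (cs.rightInvSeq ω).count t) := by
  induction ω with
  | nil => simp
  | cons i ω ih =>
    have hconj : cs.wordProd ω * t * (cs.wordProd ω)⁻¹ = cs.simple i ↔
        (cs.wordProd ω)⁻¹ * cs.simple i * cs.wordProd ω = t := by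
      constructor <;> rintro h <;> rw [← h] <;> group
    rw [List.map_cons, List.prod_cons, Equiv.Perm.mul_apply, ih, signedConj_apply, rightInvSeq,
      List.count_cons, wordProd_cons]
    simp only [hconj, beq_iff_eq]
    simp only [mul_inv_rev, inv_simple, mul_assoc, add_assoc, Nat.cast_add, Nat.cast_ite,
      Nat.cast_one, Nat.cast_zero]

theorem isLiftable_signedConj : M.IsLiftable (signedConj cs) := by
  classical
  intro i j
  have hperiod : cs.leftInvSeq (altWord j i (2 * M i j)) =
      cs.leftInvSeq (altWord j i (M i j)) ++ cs.leftInvSeq (altWord j i (M i j)) := by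
    simp [leftInvSeq_altWord, two_mul, List.range_add, pow_add, Function.comp_def]
  have hprod : cs.wordProd (alternatingWord i j (2 * M i j)) = 1 := by
    rw [wordProd, prod_map_alternatingWord_two_mul, simple_mul_simple_pow]
  ext1 ⟨t, e⟩
  rw [← prod_map_alternatingWord_two_mul, prod_map_signedConj_apply, hprod, ← reverse_altWord,
    rightInvSeq_reverse, List.count_reverse, hperiod]
  simp [CharTwo.add_self_eq_zero]

/-- The action of a Coxeter group on `W × ZMod 2` generated by `signedConj`. -/
noncomputable def signedConjHom : W →* Equiv.Perm (W × ZMod 2) :=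
  cs.lift ⟨signedConj cs, isLiftable_signedConj cs⟩

/-- The parity of the number of occurrences of `t` in the right inversion sequence of any word
for `w`. -/
noncomputable def inversionParity (w t : W) : ZMod 2 :=
  (signedConjHom cs w (t, 0)).2

open Classical in
theorem signedConjHom_wordProd_apply (ω : List B) (t : W) (e : ZMod 2) :
    signedConjHom cs (cs.wordProd ω) (t, e) =
      (cs.wordProd ω * t * (cs.wordProd ω)⁻¹, e + (cs.rightInvSeq ω).count t) := by
  rw [← prod_map_signedConj_apply, wordProd, map_list_prod, List.map_map]
  simp [signedConjHom, Function.comp_def]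

open Classical in
theorem inversionParity_wordProd (ω : List B) (t : W) :
    inversionParity cs (cs.wordProd ω) t = (cs.rightInvSeq ω).count t := by
  rw [inversionParity, signedConjHom_wordProd_apply, zero_add]

theorem signedConjHom_apply (w t : W) (e : ZMod 2) :
    signedConjHom cs w (t, e) = (w * t * w⁻¹, e + inversionParity cs w t) := by
  obtain ⟨ω, rfl⟩ := cs.wordProd_surjective w
  rw [signedConjHom_wordProd_apply, inversionParity_wordProd]

theorem inversionParity_mul (v w t : W) :
    inversionParity cs (v * w) t =
      inversionParity cs w t + inversionParity cs v (w * t * w⁻¹) := by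
  rw [inversionParity, map_mul, Equiv.Perm.mul_apply, signedConjHom_apply, signedConjHom_apply,
    zero_add]

theorem inversionParity_simple_self (i : B) :
    inversionParity cs (cs.simple i) (cs.simple i) = 1 := by
  simp [inversionParity, signedConjHom, signedConj_apply]

theorem inversionParity_self {t : W} (ht : cs.IsReflection t) : inversionParity cs t t = 1 := by
  obtain ⟨w, i, rfl⟩ := ht
  have hconj : w⁻¹ * (w * cs.simple i * w⁻¹) * w⁻¹⁻¹ = cs.simple i := by group
  have hcancel : inversionParity cs w⁻¹ (w * cs.simple i * w⁻¹) +
      inversionParity cs w (cs.simple i) = 0 := by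
    have h := inversionParity_mul cs w w⁻¹ (w * cs.simple i * w⁻¹)
    rw [hconj, mul_inv_cancel] at h
    rw [← h]
    simp [inversionParity]
  rw [inversionParity_mul, hconj, inversionParity_mul, mul_inv_cancel_right,
    inversionParity_simple_self, add_left_comm, hcancel, add_zero]

theorem mem_rightInvSeq_of_isRightInversion {ω : List B} {t : W}
    (h : cs.IsRightInversion (cs.wordProd ω) t) : t ∈ cs.rightInvSeq ω := by
  classical
  by_contra hmem
  obtain ⟨ω', hω', heq⟩ := cs.exists_isReduced (cs.wordProd ω * t)
  have hodd : ((cs.rightInvSeq ω').count t : ZMod 2) = 1 := by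
    rw [← inversionParity_wordProd, ← heq, inversionParity_mul, inversionParity_self cs h.1,
      mul_inv_cancel_right, inversionParity_wordProd, List.count_eq_zero_of_not_mem hmem,
      Nat.cast_zero, add_zero]
  have hmem' : t ∈ cs.rightInvSeq ω' := by
    by_contra hn
    simp [List.count_eq_zero_of_not_mem hn] at hodd
  have hinv := cs.isRightInversion_of_mem_rightInvSeq hω' hmem'
  rw [← heq, h.1.isRightInversion_mul_left_iff] at hinv
  exact hinv h

theorem mem_leftInvSeq_of_isLeftInversion {ω : List B} {t : W}
    (h : cs.IsLeftInversion (cs.wordProd ω) t) : t ∈ cs.leftInvSeq ω := by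
  rw [← isRightInversion_inv_iff, ← wordProd_reverse] at h
  simpa [rightInvSeq_reverse] using mem_rightInvSeq_of_isRightInversion cs h

end InversionSequences

section GeometricRepresentation

open Module Polynomial Polynomial.Chebyshev Real

theorem sin_pi_div_natCast_pos {m : ℕ} (hm : 2 ≤ m) : 0 < sin (π / m) := by
  have hm' : (2 : ℝ) ≤ m := by exact_mod_cast hm
  refine sin_pos_of_pos_of_lt_pi (by positivity) ?_
  rw [div_lt_iff₀ (by positivity)]
  nlinarith [pi_pos]

theorem eval_chebyshevU_cos_pi_div_eq_one_and_eq_zero_iff_dvd {m : ℕ} (hm : m ≠ 1) (n : ℕ) :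
    (U ℝ (2 * n)).eval (cos (π / m)) = 1 ∧ (U ℝ (2 * n - 1)).eval (cos (π / m)) = 0 ↔ m ∣ n := by
  obtain rfl | hm₀ := eq_or_ne m 0
  · simp [U_eval_one]
  have hsin := (sin_pi_div_natCast_pos (show 2 ≤ m by omega)).ne'
  set θ := π / m with hθ
  have hU_even := U_real_cos θ (2 * n)
  have hU_odd := U_real_cos θ (2 * n - 1)
  push_cast at hU_even hU_odd
  rw [add_one_mul, sin_add] at hU_even
  rw [sub_add_cancel] at hU_odd
  have hcos : cos (2 * n * θ) = 1 ↔ m ∣ n := by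
    rw [cos_eq_one_iff, ← Int.natCast_dvd_natCast, dvd_def]
    refine exists_congr fun q => ?_
    rw [hθ]
    field_simp
    norm_cast
    rw [eq_comm, mul_comm]
  rw [← hcos]
  constructor
  · rintro ⟨h_even, h_odd⟩
    rw [h_odd, zero_mul] at hU_odd
    rw [h_even, ← hU_odd, zero_mul, zero_add] at hU_even
    exact (mul_right_cancel₀ hsin hU_even).symm
  · intro h
    have hzero : sin (2 * n * θ) = 0 := sin_eq_zero_iff_cos_eq.mpr (Or.inl h)
    rw [hzero, h, zero_mul, zero_add] at hU_even
    rw [hzero] at hU_odd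
    exact ⟨mul_right_cancel₀ hsin hU_even, (mul_eq_zero.mp hU_odd).resolve_right hsin⟩

theorem two_le_coxeterMatrix_of_ne {B : Type*} {M : CoxeterMatrix B} {i j : B} (hij : i ≠ j)
    (hM : M i j ≠ 0) : 2 ≤ M i j := by
  have := M.off_diagonal i j hij
  omega

variable {B : Type*} (M : CoxeterMatrix B)

/-- The simple coroot of index `i`, as a linear form on the geometric representation `B →₀ ℝ`: twice
the canonical bilinear form against the basis vector of index `i`. Pairs of infinite order are
encoded by `M i j = 0`, for which `π / 0 = 0` yields the usual value `-2`. -/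
noncomputable def simpleCoroot (i : B) : Dual ℝ (B →₀ ℝ) :=
  Finsupp.linearCombination ℝ fun j => -2 * cos (π / M i j)

theorem simpleCoroot_single_one (i j : B) :
    simpleCoroot M i (Finsupp.single j 1) = -2 * cos (π / M i j) := by
  simp [simpleCoroot]

theorem simpleCoroot_single_one_self (i : B) : simpleCoroot M i (Finsupp.single i 1) = 2 := by
  simp [simpleCoroot_single_one]

/-- The simple reflection of index `i` in the geometric representation, which is used to show that
`s_i s_j` has order no smaller than `M i j`. -/
noncomputable def geomReflection (i : B) : (B →₀ ℝ) ≃ₗ[ℝ] (B →₀ ℝ) :=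
  reflection (simpleCoroot_single_one_self M i)

theorem geomReflection_apply (i : B) (z : B →₀ ℝ) :
    geomReflection M i z = z - simpleCoroot M i z • Finsupp.single i 1 :=
  reflection_apply _ _

theorem geomReflection_mul_self (i : B) : geomReflection M i * geomReflection M i = 1 :=
  LinearEquiv.ext (involutive_reflection (simpleCoroot_single_one_self M i))

theorem geomReflection_mul_pow_apply_single (i j : B) (n : ℕ) :
    ((geomReflection M i * geomReflection M j) ^ n) (Finsupp.single i 1) =
      (U ℝ (2 * n)).eval (cos (π / M i j)) • Finsupp.single i 1 +
        (U ℝ (2 * n - 1)).eval (cos (π / M i j)) • Finsupp.single j 1 := by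
  induction n with
  | zero => simp
  | succ n ih =>
    have hU_odd := congrArg (eval (cos (π / M i j))) (U_add_two ℝ (2 * n - 1))
    have hU_even := congrArg (eval (cos (π / M i j))) (U_add_two ℝ (2 * n))
    rw [show (2 * n - 1 + 2 : ℤ) = 2 * n + 1 by ring, sub_add_cancel] at hU_odd
    simp only [eval_sub, eval_mul, eval_X, eval_ofNat] at hU_odd hU_even
    rw [pow_succ', LinearEquiv.mul_apply, ih, Nat.cast_succ,
      show (2 * (n + 1) : ℤ) = 2 * n + 2 by ring, show (2 * n + 2 - 1 : ℤ) = 2 * n + 1 by ring,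
      hU_even, hU_odd]
    simp only [LinearEquiv.mul_apply, geomReflection_apply, map_add, map_sub, map_smul,
      simpleCoroot_single_one, M.diagonal, Nat.cast_one, div_one, cos_pi, M.symmetric j i]
    match_scalars <;> ring

theorem geomReflection_mul_pow_apply_single_eq_iff {i j : B} (hij : i ≠ j) (n : ℕ) :
    ((geomReflection M i * geomReflection M j) ^ n) (Finsupp.single i 1) = Finsupp.single i 1 ↔
      M i j ∣ n := by
  rw [← eval_chebyshevU_cos_pi_div_eq_one_and_eq_zero_iff_dvd (M.off_diagonal i j hij),
    geomReflection_mul_pow_apply_single]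
  constructor
  · intro h
    exact ⟨by simpa [hij] using DFunLike.congr_fun h i,
      by simpa [hij, hij.symm] using DFunLike.congr_fun h j⟩
  · rintro ⟨h_even, h_odd⟩
    rw [h_even, h_odd, one_smul, zero_smul, add_zero]

theorem geomReflection_mul_pow_apply_of_simpleCoroot_eq_zero {i j : B} {z : B →₀ ℝ}
    (hi : simpleCoroot M i z = 0) (hj : simpleCoroot M j z = 0) (n : ℕ) :
    ((geomReflection M i * geomReflection M j) ^ n) z = z := by
  induction n with
  | zero => rfl
  | succ n ih => simp [pow_succ, LinearEquiv.mul_apply, geomReflection_apply, hi, hj, ih]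

theorem exists_eq_smul_single_add_smul_single_add {i j : B} (hij : i ≠ j) (hM : M i j ≠ 0)
    (z : B →₀ ℝ) :
    ∃ (a b : ℝ) (y : B →₀ ℝ), z = a • Finsupp.single i 1 + b • Finsupp.single j 1 + y ∧
      simpleCoroot M i y = 0 ∧ simpleCoroot M j y = 0 := by
  have hsin := (sin_pi_div_natCast_pos (two_le_coxeterMatrix_of_ne hij hM)).ne'
  have hcos := sin_sq (π / M i j)
  set p := simpleCoroot M i z with hp
  set q := simpleCoroot M j z with hq
  set s := sin (π / M i j)
  set c := cos (π / M i j) with hc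
  -- The coefficients solve the Gram system of `e_i` and `e_j`, of determinant `4 * s ^ 2`.
  refine ⟨(p + c * q) / (2 * s ^ 2), (q + c * p) / (2 * s ^ 2),
    z - ((p + c * q) / (2 * s ^ 2)) • Finsupp.single i 1 -
      ((q + c * p) / (2 * s ^ 2)) • Finsupp.single j 1, by abel, ?_, ?_⟩ <;>
  · simp only [map_sub, map_smul, simpleCoroot_single_one, M.diagonal, Nat.cast_one, div_one,
      cos_pi, smul_eq_mul, M.symmetric j i, ← hp, ← hq, ← hc]
    field_simp
    rw [hcos]
    ring

theorem isLiftable_geomReflection : M.IsLiftable (geomReflection M) := by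
  intro i j
  obtain rfl | hij := eq_or_ne i j
  · rw [geomReflection_mul_self, one_pow]
  obtain hM | hM := eq_or_ne (M i j) 0
  · rw [hM, pow_zero]
  have hfix_i := (geomReflection_mul_pow_apply_single_eq_iff M hij (M i j)).mpr dvd_rfl
  have hfix_j := (geomReflection_mul_pow_apply_single_eq_iff M hij.symm (M i j)).mpr
    (M.symmetric j i).dvd
  have hinv : (geomReflection M j * geomReflection M i) ^ M i j =
      ((geomReflection M i * geomReflection M j) ^ M i j)⁻¹ := by
    rw [← inv_pow, mul_inv_rev]
    rfl
  rw [hinv] at hfix_j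
  have hfix_j' := (LinearEquiv.symm_apply_eq _).mp hfix_j
  ext1 z
  obtain ⟨a, b, y, rfl, hi, hj⟩ := exists_eq_smul_single_add_smul_single_add M hij hM z
  rw [map_add, map_add, map_smul, map_smul, hfix_i, ← hfix_j',
    geomReflection_mul_pow_apply_of_simpleCoroot_eq_zero M hi hj]
  rfl

end GeometricRepresentation

section Dihedral

variable {B : Type*} {M : CoxeterMatrix B} {W : Type*} [Group W] (cs : CoxeterSystem M W)

theorem orderOf_simple_mul_simple (i j : B) :
    orderOf (cs.simple i * cs.simple j) = M i j := by
  obtain rfl | hij := eq_or_ne i j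
  · simp
  refine Nat.dvd_antisymm (orderOf_dvd_of_pow_eq_one (cs.simple_mul_simple_pow i j)) ?_
  rw [← geomReflection_mul_pow_apply_single_eq_iff M hij]
  have h := congrArg (cs.lift ⟨geomReflection M, isLiftable_geomReflection M⟩)
    (pow_orderOf_eq_one (cs.simple i * cs.simple j))
  rw [map_pow, map_mul, lift_apply_simple, lift_apply_simple, map_one] at h
  rw [h, LinearEquiv.coe_one, id]

theorem simple_injective : Function.Injective cs.simple := by
  intro i j h
  by_contra hij
  have horder := orderOf_simple_mul_simple cs i j
  rw [h, simple_mul_simple_self, orderOf_one] at horder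
  exact M.off_diagonal i j hij horder.symm

theorem altWord_succ_eq_append (i j : B) (n : ℕ) :
    altWord i j (n + 1) = altWord i j n ++ [if Even n then i else j] := by
  induction n generalizing i j with
  | zero => simp [altWord]
  | succ n ih =>
    rw [altWord, ih, altWord]
    by_cases h : Even n <;> simp [Nat.even_add_one, h]

theorem wordProd_altWord_comm (i j : B) :
    cs.wordProd (altWord i j (M i j)) = cs.wordProd (altWord j i (M i j)) := by
  rw [← inv_inj, ← wordProd_reverse, ← wordProd_reverse, reverse_altWord, reverse_altWord]
  have h := cs.wordProd_braidWord_eq j i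
  rwa [braidWord, braidWord, M.symmetric j i] at h

theorem simple_notMem_leftInvSeq_altWord {i j : B} {n : ℕ} (hn : M i j = 0 ∨ n < M i j) :
    cs.simple i ∉ cs.leftInvSeq (altWord j i n) := by
  rw [leftInvSeq_altWord, List.mem_map]
  rintro ⟨k, hk, heq⟩
  have hpow : (cs.simple j * cs.simple i) ^ (k + 1) = 1 := by
    rw [pow_succ, ← mul_assoc, heq, simple_mul_simple_self]
  have hle := Nat.le_of_dvd k.succ_pos (orderOf_dvd_of_pow_eq_one hpow)
  have hne := (orderOf_pos_iff.mpr (isOfFinOrder_iff_pow_eq_one.mpr ⟨k + 1, k.succ_pos, hpow⟩)).ne'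
  rw [orderOf_simple_mul_simple, M.symmetric j i] at hle hne
  rw [List.mem_range] at hk
  omega

theorem exists_length_lt_simple_mul_wordProd_mul_eq {i : B} {ω : List B} {y : W}
    (hdesc : cs.IsLeftDescent (cs.wordProd ω * y) i) (hω : cs.simple i ∉ cs.leftInvSeq ω) :
    ∃ y', cs.length y' < cs.length y ∧
      cs.simple i * (cs.wordProd ω * y) = cs.wordProd ω * y' := by
  obtain ⟨ω', hω', rfl⟩ := cs.exists_isReduced y
  rw [← isLeftInversion_simple_iff_isLeftDescent, ← wordProd_append] at hdesc
  have hmem := mem_leftInvSeq_of_isLeftInversion cs hdesc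
  rw [leftInvSeq_append, List.mem_append] at hmem
  obtain ⟨t, ht, hconj⟩ := List.mem_map.mp (hmem.resolve_left hω)
  refine ⟨t * cs.wordProd ω', (cs.isLeftInversion_of_mem_leftInvSeq hω' ht).2, ?_⟩
  rw [← hconj, MulAut.conj_apply]
  group

theorem exists_eq_wordProd_altWord_mul_of_isLeftDescent {x : W} {n : ℕ} {i j : B}
    (hn : M i j = 0 ∨ n ≤ M i j) (hi : cs.IsLeftDescent x i) (hj : cs.IsLeftDescent x j) :
    ∃ y, x = cs.wordProd (altWord i j n) * y ∧ cs.length x = n + cs.length y := by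
  induction n generalizing i j with
  | zero => exact ⟨x, by simp [altWord]⟩
  | succ n ih =>
    obtain ⟨y, rfl, hlen⟩ := ih (by rw [M.symmetric j i]; omega) hj hi
    obtain ⟨y', hlt, heq⟩ := exists_length_lt_simple_mul_wordProd_mul_eq cs hi
      (simple_notMem_leftInvSeq_altWord cs (by omega))
    have hfactor : cs.wordProd (altWord j i n) * y = cs.wordProd (altWord i j (n + 1)) * y' := by
      rw [altWord, wordProd_cons, mul_assoc, ← heq, simple_mul_simple_cancel_left]
    have hle := cs.length_mul_le (cs.wordProd (altWord i j (n + 1))) y'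
    have hword := cs.length_wordProd_le (altWord i j (n + 1))
    rw [← hfactor] at hle
    rw [length_altWord] at hword
    exact ⟨y', hfactor, by omega⟩

theorem coxeterMatrix_ne_zero_of_isLeftDescent {x : W} {i j : B} (hi : cs.IsLeftDescent x i)
    (hj : cs.IsLeftDescent x j) : M i j ≠ 0 := by
  intro hM
  obtain ⟨y, -, hlen⟩ := exists_eq_wordProd_altWord_mul_of_isLeftDescent cs
    (n := cs.length x + 1) (Or.inl hM) hi hj
  omega

end Dihedral

section RWord

variable {B : Type*} {M : CoxeterMatrix B} {W : Type*} [Group W] (cs : CoxeterSystem M W)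

theorem length_rWord (i j : B) : (rWord M i j).length = M i j - 1 :=
  length_altWord _ _ _

theorem altWord_eq_rWord_append {i j : B} (hM : M i j ≠ 0) :
    altWord i j (M i j) = rWord M i j ++ [dIdx M i j] := by
  obtain ⟨m, hm⟩ := Nat.exists_eq_succ_of_ne_zero hM
  rw [rWord, dIdx, hm, Nat.succ_sub_one, Nat.succ_eq_add_one, altWord_succ_eq_append]
  by_cases h : Even m <;> simp [Nat.even_add_one, h]

theorem altWord_eq_cons_rWord {i j : B} (hM : M i j ≠ 0) :
    altWord j i (M i j) = j :: rWord M i j := by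
  obtain ⟨m, hm⟩ := Nat.exists_eq_succ_of_ne_zero hM
  rw [rWord, hm, Nat.succ_sub_one, altWord]

theorem rWord_eq_cons {i j : B} (hij : i ≠ j) (hM : M i j ≠ 0) :
    rWord M i j = i :: altWord j i (M i j - 2) := by
  obtain ⟨m, hm⟩ := Nat.exists_eq_add_of_le' (two_le_coxeterMatrix_of_ne hij hM)
  rw [rWord, hm, show m + 2 - 1 = m + 1 by omega, Nat.add_sub_cancel, altWord]

theorem rWord_eq_append_bIdx {i j : B} (hij : i ≠ j) (hM : M i j ≠ 0) :
    rWord M i j = altWord i j (M i j - 2) ++ [bIdx M i j] := by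
  obtain ⟨m, hm⟩ := Nat.exists_eq_add_of_le' (two_le_coxeterMatrix_of_ne hij hM)
  rw [rWord, bIdx, hm, show m + 2 - 1 = m + 1 by omega, Nat.add_sub_cancel,
    altWord_succ_eq_append]
  simp [Nat.even_add]

theorem simple_mul_wordProd_rWord {i j : B} (hM : M i j ≠ 0) :
    cs.simple j * cs.wordProd (rWord M i j) =
      cs.wordProd (rWord M i j) * cs.simple (dIdx M i j) := by
  rw [← wordProd_cons, ← altWord_eq_cons_rWord hM, ← wordProd_altWord_comm,
    altWord_eq_rWord_append hM, wordProd_append, wordProd_singleton]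

theorem exists_eq_wordProd_rWord_mul {u w : B} {v : W}
    (huw : cs.simple u * v = v * cs.simple w) (hu : ¬cs.IsLeftDescent v u) (hv : v ≠ 1) :
    ∃ i y, i ≠ u ∧ M i u ≠ 0 ∧ v = cs.wordProd (rWord M i u) * y ∧
      cs.length v = (rWord M i u).length + cs.length y := by
  obtain ⟨i, hi⟩ := cs.exists_leftDescent_of_ne_one hv
  have hne : i ≠ u := by
    rintro rfl
    exact hu hi
  have hlen := cs.not_isLeftDescent_iff.mp hu
  have hdesc_u : cs.IsLeftDescent (cs.simple u * v) u := by
    rwa [isLeftDescent_iff_not_isLeftDescent_mul, simple_mul_simple_cancel_left]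
  have hdesc_i : cs.IsLeftDescent (cs.simple u * v) i := by
    have hle := cs.length_mul_le (cs.simple i * v) (cs.simple w)
    rw [length_simple, mul_assoc, ← huw] at hle
    have := cs.isLeftDescent_iff.mp hi
    rw [IsLeftDescent]
    omega
  have hM := coxeterMatrix_ne_zero_of_isLeftDescent cs hdesc_i hdesc_u
  obtain ⟨y, hy, hadd⟩ := exists_eq_wordProd_altWord_mul_of_isLeftDescent cs (n := M i u)
    (Or.inr (M.symmetric i u).le) hdesc_u hdesc_i
  rw [altWord_eq_cons_rWord hM, wordProd_cons, mul_assoc] at hy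
  refine ⟨i, y, hne, hM, mul_left_cancel hy, ?_⟩
  rw [length_rWord]
  omega

theorem not_isLeftDescent_dIdx {i u : B} {y : W} (hM : M i u ≠ 0)
    (hlen : cs.length (cs.wordProd (rWord M i u) * y) = (rWord M i u).length + cs.length y)
    (hu : ¬cs.IsLeftDescent (cs.wordProd (rWord M i u) * y) u) :
    ¬cs.IsLeftDescent y (dIdx M i u) := by
  intro hd
  apply hu
  rw [IsLeftDescent, ← mul_assoc, simple_mul_wordProd_rWord cs hM, mul_assoc, hlen]
  calc cs.length (cs.wordProd (rWord M i u) * (cs.simple (dIdx M i u) * y))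
      ≤ (rWord M i u).length + cs.length (cs.simple (dIdx M i u) * y) :=
        (cs.length_mul_le _ _).trans (Nat.add_le_add_right (cs.length_wordProd_le _) _)
    _ < (rWord M i u).length + cs.length y := Nat.add_lt_add_left hd _

end RWord

section RChain

variable {B : Type*} {M : CoxeterMatrix B} {W : Type*} [Group W] (cs : CoxeterSystem M W)

theorem ne_of_isReduced_append_cons_cons {a b : B} {ω ω' : List B}
    (h : cs.IsReduced (ω ++ a :: b :: ω')) : a ≠ b := by
  rintro rfl
  have hpair : cs.IsReduced [a, a] := by simpa using (h.drop ω.length).take 2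
  simp [CoxeterSystem.IsReduced, wordProd_cons] at hpair

/-- The word `r_{i_0,j_0} ⋯ r_{i_{k-1},j_{k-1}}`; the indices start at `0`. -/
def rConcat (M : CoxeterMatrix B) (i j : ℕ → B) (k : ℕ) : List B :=
  ((List.range k).map fun l => rWord M (i l) (j l)).flatten

theorem rConcat_succ (i j : ℕ → B) (k : ℕ) :
    rConcat M i j (k + 1) = rConcat M i j k ++ rWord M (i k) (j k) := by
  simp [rConcat, List.range_succ]

theorem rConcat_casesOn_succ (i₀ j₀ : B) (i j : ℕ → B) (k : ℕ) :
    rConcat M (fun l => Nat.casesOn l i₀ i) (fun l => Nat.casesOn l j₀ j) (k + 1) =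
      rWord M i₀ j₀ ++ rConcat M i j k := by
  simp [rConcat, List.range_succ_eq_map, Function.comp_def]

theorem isReduced_rConcat_of_le {i j : ℕ → B} {k l : ℕ} (hlk : l ≤ k)
    (h : cs.IsReduced (rConcat M i j k)) : cs.IsReduced (rConcat M i j l) := by
  obtain ⟨n, rfl⟩ := Nat.exists_eq_add_of_le hlk
  have happend : ∃ ω, rConcat M i j (l + n) = rConcat M i j l ++ ω := by
    simp [rConcat, List.range_add]
  obtain ⟨ω, hω⟩ := happend
  simpa [hω] using h.take (rConcat M i j l).length

/-- A chain of `k` pairs `(i_l, j_l)` such that the letters `s_{j_0}, …, s_{j_k}` are successively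
intertwined by the elements `r_{i_l,j_l}`. The letter `j_k` is the endpoint of the chain and belongs
to no pair, so that the chain with `k = 0` joins a letter to itself. -/
structure IsRChain (M : CoxeterMatrix B) (i j : ℕ → B) (k : ℕ) : Prop where
  ne : ∀ l < k, i l ≠ j l
  ne_zero : ∀ l < k, M (i l) (j l) ≠ 0
  next : ∀ l < k, j (l + 1) = dIdx M (i l) (j l)

theorem IsRChain.simple_mul_wordProd {i j : ℕ → B} {k : ℕ} (h : IsRChain M i j k) :
    cs.simple (j 0) * cs.wordProd (rConcat M i j k) =
      cs.wordProd (rConcat M i j k) * cs.simple (j k) := by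
  induction k with
  | zero => simp [rConcat]
  | succ k ih =>
    have hk : IsRChain M i j k := ⟨fun l hl => h.ne l (by omega),
      fun l hl => h.ne_zero l (by omega), fun l hl => h.next l (by omega)⟩
    rw [rConcat_succ, wordProd_append, ← mul_assoc, ih hk, mul_assoc,
      simple_mul_wordProd_rWord cs (h.ne_zero k k.lt_succ_self), ← h.next k k.lt_succ_self,
      mul_assoc]

theorem IsRChain.cons {i₀ j₀ : B} {i j : ℕ → B} {k : ℕ} (h : IsRChain M i j k) (hne : i₀ ≠ j₀)
    (hM : M i₀ j₀ ≠ 0) (hnext : j 0 = dIdx M i₀ j₀) :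
    IsRChain M (fun l => Nat.casesOn l i₀ i) (fun l => Nat.casesOn l j₀ j) (k + 1) where
  ne
    | 0, _ => hne
    | l + 1, hl => h.ne l (Nat.lt_of_succ_lt_succ hl)
  ne_zero
    | 0, _ => hM
    | l + 1, hl => h.ne_zero l (Nat.lt_of_succ_lt_succ hl)
  next
    | 0, _ => hnext
    | l + 1, hl => h.next l (Nat.lt_of_succ_lt_succ hl)

theorem IsRChain.bIdx_ne {i j : ℕ → B} {k l : ℕ} (h : IsRChain M i j k)
    (hred : cs.IsReduced (rConcat M i j k)) (hl : l + 1 < k) : bIdx M (i l) (j l) ≠ i (l + 1) := by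
  have hword := isReduced_rConcat_of_le cs (show l + 2 ≤ k by omega) hred
  rw [rConcat_succ, rConcat_succ, rWord_eq_append_bIdx (h.ne l (by omega)) (h.ne_zero l (by omega)),
    rWord_eq_cons (h.ne (l + 1) hl) (h.ne_zero (l + 1) hl), ← List.append_assoc,
    List.append_assoc _ [_], List.singleton_append] at hword
  exact ne_of_isReduced_append_cons_cons cs hword

theorem IsRChain.adjacent_ne {i j : ℕ → B} {k l : ℕ} (h : IsRChain M i j k)
    (hred : cs.IsReduced (rConcat M i j k)) (hl : l + 1 < k) :
    i (l + 1) ≠ i l ∧ i (l + 1) ≠ j l ∧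
      bIdx M (i l) (j l) ≠ i (l + 1) ∧ bIdx M (i l) (j l) ≠ j (l + 1) := by
  have hb := h.bIdx_ne cs hred hl
  have hne := h.ne l (by omega)
  have hne' := h.ne (l + 1) hl
  rw [h.next l (by omega)] at hne' ⊢
  by_cases hM : Even (M (i l) (j l))
  · simp only [bIdx, dIdx, if_pos hM] at hb hne' ⊢
    exact ⟨hb.symm, hne', hb, hne⟩
  · simp only [bIdx, dIdx, if_neg hM] at hb hne' ⊢
    exact ⟨hne', hb.symm, hb, hne.symm⟩

theorem exists_isRChain {u w : B} {v : W} (huw : cs.simple u * v = v * cs.simple w)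
    (hu : ¬cs.IsLeftDescent v u) :
    ∃ (k : ℕ) (i j : ℕ → B), IsRChain M i j k ∧ v = cs.wordProd (rConcat M i j k) ∧
      cs.IsReduced (rConcat M i j k) ∧ j 0 = u ∧ j k = w := by
  induction hn : cs.length v using Nat.strong_induction_on generalizing u v with
  | _ n ih =>
  subst hn
  obtain rfl | hv := eq_or_ne v 1
  · rw [mul_one, one_mul] at huw
    exact ⟨0, fun _ => u, fun _ => u, ⟨by simp, by simp, by simp⟩, by simp [rConcat],
      by simp [rConcat, CoxeterSystem.IsReduced], rfl, simple_injective cs huw⟩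
  obtain ⟨i₀, y, hne, hM, rfl, hlen⟩ := exists_eq_wordProd_rWord_mul cs huw hu hv
  have hyw : cs.simple (dIdx M i₀ u) * y = y * cs.simple w := by
    rw [← mul_assoc, simple_mul_wordProd_rWord cs hM, mul_assoc, mul_assoc] at huw
    exact mul_left_cancel huw
  have hpos : 0 < (rWord M i₀ u).length := by simp [rWord_eq_cons hne hM]
  obtain ⟨k, i, j, hchain, rfl, hred, hj, rfl⟩ :=
    ih (cs.length y) (by omega) hyw (not_isLeftDescent_dIdx cs hM hlen hu) rfl
  refine ⟨k + 1, _, _, hchain.cons hne hM hj, ?_, ?_, rfl, rfl⟩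
  · rw [rConcat_casesOn_succ, wordProd_append]
  · rw [rConcat_casesOn_succ, CoxeterSystem.IsReduced, wordProd_append, hlen, hred,
      List.length_append]

end RChain

theorem simple_mul_eq_mul_simple_iff_exists_rWord_decomposition_general
    {B : Type*} {M : CoxeterMatrix B} {W : Type*} [Group W] (cs : CoxeterSystem M W)
    (u w : B) (v : W) (h₁ : cs.length v ≤ cs.length (cs.simple u * v)) :
    cs.simple u * v = v * cs.simple w ↔
      ((v = 1 ∧ u = w) ∨
        ∃ (k : ℕ), 1 ≤ k ∧ ∃ i j : ℕ → B,
          (∀ l < k, i l ≠ j l ∧ M (i l) (j l) ≠ 0) ∧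
          v = cs.wordProd (((List.range k).map fun l => rWord M (i l) (j l)).flatten) ∧
          cs.IsReduced (((List.range k).map fun l => rWord M (i l) (j l)).flatten) ∧
          u = j 0 ∧
          w = dIdx M (i (k - 1)) (j (k - 1)) ∧
          (∀ l, l + 1 < k →
            j (l + 1) = dIdx M (i l) (j l) ∧
            i (l + 1) ≠ i l ∧ i (l + 1) ≠ j l ∧
            bIdx M (i l) (j l) ≠ i (l + 1) ∧ bIdx M (i l) (j l) ≠ j (l + 1))) := by
  constructor
  · intro huw
    obtain ⟨_ | k, i, j, hchain, rfl, hred, rfl, rfl⟩ := exists_isRChain cs huw h₁.not_gt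
    · exact Or.inl ⟨rfl, rfl⟩
    · exact Or.inr ⟨k + 1, k.succ_pos, i, j, fun l hl => ⟨hchain.ne l hl, hchain.ne_zero l hl⟩,
        rfl, hred, rfl, hchain.next k k.lt_succ_self,
        fun l hl => ⟨hchain.next l (by omega), hchain.adjacent_ne cs hred hl⟩⟩
  · rintro (⟨rfl, rfl⟩ | ⟨_ | k, hk, i, j, hij, rfl, -, rfl, rfl, hstep⟩)
    · rw [mul_one, one_mul]
    · omega
    · have hchain : IsRChain M i j k := ⟨fun l hl => (hij l (by omega)).1,
        fun l hl => (hij l (by omega)).2, fun l hl => (hstep l (by omega)).1⟩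
      change _ * cs.wordProd (rConcat M i j (k + 1)) = cs.wordProd (rConcat M i j (k + 1)) * _
      rw [rConcat_succ, wordProd_append, ← mul_assoc, hchain.simple_mul_wordProd, mul_assoc,
        simple_mul_wordProd_rWord cs (hij k k.lt_succ_self).2, Nat.add_sub_cancel, mul_assoc]

/-- Let `W = ⟨S|M⟩` be a finite rank Coxeter system, `u, w ∈ S` and `v ∈ W` with
`|v| ≤ |uv|` and `|v| ≤ |vw|`.  Then `uv = vw` iff either `v = e` and `u = w`, or `v` has a
reduced expression `r_{i_1,j_1} ⋯ r_{i_k,j_k}` (`k ≥ 1`, `i_l ≠ j_l`, `m_{i_l,j_l} < ∞`)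
with `u = c_{i_1,j_1}`, `w = d_{i_k,j_k}`, and for `l = 1, …, k−1`:
`c_{i_{l+1},j_{l+1}} = d_{i_l,j_l}`, `a_{i_{l+1},j_{l+1}} ∉ {s_{i_l}, s_{j_l}}` and
`b_{i_l,j_l} ∉ {s_{i_{l+1}}, s_{j_{l+1}}}`. -/
theorem simple_mul_eq_mul_simple_iff_exists_rWord_decomposition
    {B : Type*} [Fintype B] {M : CoxeterMatrix B}
    {W : Type*} [Group W] (cs : CoxeterSystem M W)
    (u w : B) (v : W)
    (h₁ : cs.length v ≤ cs.length (cs.simple u * v))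
    (h₂ : cs.length v ≤ cs.length (v * cs.simple w)) :
    cs.simple u * v = v * cs.simple w ↔
      ((v = 1 ∧ u = w) ∨
        ∃ (k : ℕ), 1 ≤ k ∧ ∃ i j : ℕ → B,
          (∀ l < k, i l ≠ j l ∧ M (i l) (j l) ≠ 0) ∧
          v = cs.wordProd (((List.range k).map fun l => rWord M (i l) (j l)).flatten) ∧
          cs.IsReduced (((List.range k).map fun l => rWord M (i l) (j l)).flatten) ∧
          u = j 0 ∧
          w = dIdx M (i (k - 1)) (j (k - 1)) ∧
          (∀ l, l + 1 < k →
            j (l + 1) = dIdx M (i l) (j l) ∧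
            i (l + 1) ≠ i l ∧ i (l + 1) ≠ j l ∧
            bIdx M (i l) (j l) ≠ i (l + 1) ∧ bIdx M (i l) (j l) ≠ j (l + 1))) := by
  exact simple_mul_eq_mul_simple_iff_exists_rWord_decomposition_general cs u w v h₁
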